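/- Let G and Q be groups, ρ : G → Q a group homomorphism with kernel K, ω a normalized U(1)-valued 3-cocycle on Q, and c : G × G → U(1) a normalized 2-cochain with dc(f,g,h) = ω(ρ(f),ρ(g),ρ(h)) for all f,g,h ∈ G. Then for all g ∈ G and k ∈ K: c(k,k⁻¹)⁻¹·c(g,k⁻¹)·c(gk⁻¹g⁻¹,g)⁻¹ = c(gkg⁻¹,gk⁻¹g⁻¹)⁻¹·c(gkg⁻¹,g)·c(g,k)⁻¹. -/

import Mathlib

/-!
For `a = g * k⁻¹ * g⁻¹`, both sides equal `(c a (g * k))⁻¹ * (c g k)⁻¹`, because `dc` is trivial on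
every triple with an entry in `ker ρ`. The left side needs this for the triples `(g, k, k⁻¹)` and
`(a, g * k, k⁻¹)`, the right side for `(a, a⁻¹, g)` and `(a⁻¹, a, a⁻¹)`.
-/

section

variable {G A : Type*} [Group G] [CommGroup A] {c : G → G → A}

/-- The coboundary `dc` of a 2-cochain `c` with values in a trivial module `A`, written
multiplicatively. The sign convention is the paper's, inverse to the usual one. -/
def mulCoboundary₂ (c : G → G → A) (f g h : G) : A :=
  (c g h)⁻¹ * c (f * g) h * (c f (g * h))⁻¹ * c f g

namespace mulCoboundary₂

theorem eq_one_iff {f g h : G} :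
    mulCoboundary₂ c f g h = 1 ↔ c (f * g) h * c f g = c g h * c f (g * h) := by
  rw [mulCoboundary₂, mul_right_comm, mul_inv_eq_one, mul_assoc, inv_mul_eq_iff_eq_mul]

theorem apply_mul_inv_mul_apply (hc_right : ∀ g, c g 1 = 1) {g k : G}
    (h : mulCoboundary₂ c g k k⁻¹ = 1) : c (g * k) k⁻¹ * c g k = c k k⁻¹ := by
  simpa only [mul_inv_cancel, hc_right, mul_one] using eq_one_iff.1 h

theorem apply_mul_apply_inv_mul (hc_left : ∀ g, c 1 g = 1) {b g : G}
    (h : mulCoboundary₂ c b⁻¹ b g = 1) : c b g * c b⁻¹ (b * g) = c b⁻¹ b := by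
  simpa only [inv_mul_cancel, hc_left, one_mul] using (eq_one_iff.1 h).symm

theorem apply_inv_self (hc_left : ∀ g, c 1 g = 1) (hc_right : ∀ g, c g 1 = 1) {b : G}
    (h : mulCoboundary₂ c b b⁻¹ b = 1) : c b⁻¹ b = c b b⁻¹ := by
  simpa only [mul_inv_cancel, inv_mul_cancel, hc_left, hc_right, one_mul, mul_one] using
    (eq_one_iff.1 h).symm

theorem inv_apply_self_inv_mul_apply (hc_left : ∀ g, c 1 g = 1) (hc_right : ∀ g, c g 1 = 1)
    {b g : G} (hb : mulCoboundary₂ c b b⁻¹ b = 1) (hbg : mulCoboundary₂ c b⁻¹ b g = 1) :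
    (c b b⁻¹)⁻¹ * c b g = (c b⁻¹ (b * g))⁻¹ := by
  rw [← apply_inv_self hc_left hc_right hb, ← apply_mul_apply_inv_mul hc_left hbg, mul_inv,
    mul_right_comm, inv_mul_cancel, one_mul]

theorem inv_apply_self_inv_mul_apply_mul_inv_apply (hc_right : ∀ g, c g 1 = 1) {a g k : G}
    (hgk : mulCoboundary₂ c g k k⁻¹ = 1) (hagk : mulCoboundary₂ c a (g * k) k⁻¹ = 1) :
    (c k k⁻¹)⁻¹ * c (a * (g * k)) k⁻¹ * (c a g)⁻¹ = (c a (g * k))⁻¹ * (c g k)⁻¹ := by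
  have hassoc : c (a * (g * k)) k⁻¹ * c a (g * k) = c (g * k) k⁻¹ * c a g := by
    simpa only [mul_inv_cancel_right] using eq_one_iff.1 hagk
  have hprod : c (a * (g * k)) k⁻¹ * (c a (g * k) * c g k) = c k k⁻¹ * c a g := by
    rw [← mul_assoc, hassoc, mul_right_comm, apply_mul_inv_mul_apply hc_right hgk]
  rw [mul_right_comm, ← mul_inv, ← mul_inv, inv_mul_eq_iff_eq_mul, ← hprod, mul_inv_cancel_right]

end mulCoboundary₂

open mulCoboundary₂ in
theorem jones_star_identity_general {K : Subgroup G} [K.Normal]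
    (hc_left : ∀ g, c 1 g = 1) (hc_right : ∀ g, c g 1 = 1)
    (hdc : ∀ f g h, f ∈ K ∨ h ∈ K → mulCoboundary₂ c f g h = 1) (g : G) {k : G} (hk : k ∈ K) :
    (c k k⁻¹)⁻¹ * c g k⁻¹ * (c (g * k⁻¹ * g⁻¹) g)⁻¹
      = (c (g * k * g⁻¹) (g * k⁻¹ * g⁻¹))⁻¹ * c (g * k * g⁻¹) g * (c g k)⁻¹ := by
  have hb : g * k * g⁻¹ ∈ K := Subgroup.Normal.conj_mem ‹_› k hk g
  have hk' : k⁻¹ ∈ K := K.inv_mem hk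
  rw [← conj_inv]
  calc (c k k⁻¹)⁻¹ * c g k⁻¹ * (c (g * k * g⁻¹)⁻¹ g)⁻¹
      = (c (g * k * g⁻¹)⁻¹ (g * k))⁻¹ * (c g k)⁻¹ := by
        have hmul : (g * k * g⁻¹)⁻¹ * (g * k) = g := by group
        simpa only [hmul] using inv_apply_self_inv_mul_apply_mul_inv_apply hc_right
          (hdc g k k⁻¹ (.inr hk')) (hdc (g * k * g⁻¹)⁻¹ (g * k) k⁻¹ (.inr hk'))
    _ = (c (g * k * g⁻¹) (g * k * g⁻¹)⁻¹)⁻¹ * c (g * k * g⁻¹) g * (c g k)⁻¹ := by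
        rw [inv_apply_self_inv_mul_apply hc_left hc_right (hdc _ _ _ (.inl hb))
          (hdc _ _ _ (.inl (K.inv_mem hb))), inv_mul_cancel_right]

end

/-- **Statement 16** (proved in Lemma 3.2 of the paper; it establishes that the automorphisms
`α_q` of the twisted crossed product are ⋆-preserving).  If `c` is a normalized `U(1)`-valued
2-cochain on `G` whose coboundary is the pullback along `ρ : G → Q` of a normalized 3-cocycle
`ω` on `Q`, then for all `g ∈ G` and `k ∈ K = ker ρ`:
`c(k,k⁻¹)⁻¹·c(g,k⁻¹)·c(gk⁻¹g⁻¹,g)⁻¹ = c(gkg⁻¹,gk⁻¹g⁻¹)⁻¹·c(gkg⁻¹,g)·c(g,k)⁻¹`. -/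
theorem jones_star_identity
    {G Q : Type*} [Group G] [Group Q] (ρ : G →* Q)
    (ω : Q → Q → Q → Circle)
    (hω_norm : ∀ g h k, g = 1 ∨ h = 1 ∨ k = 1 → ω g h k = 1)
    (hω_coc : ∀ g₁ g₂ g₃ g₄,
      ω (g₁ * g₂) g₃ g₄ * ω g₁ g₂ (g₃ * g₄)
        = ω g₂ g₃ g₄ * ω g₁ (g₂ * g₃) g₄ * ω g₁ g₂ g₃)
    (c : G → G → Circle)
    (hc_norm : ∀ g h, g = 1 ∨ h = 1 → c g h = 1)
    (hdc : ∀ f g h : G,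
      (c g h)⁻¹ * c (f * g) h * (c f (g * h))⁻¹ * c f g = ω (ρ f) (ρ g) (ρ h)) :
    ∀ (g k : G), k ∈ ρ.ker →
      (c k k⁻¹)⁻¹ * c g k⁻¹ * (c (g * k⁻¹ * g⁻¹) g)⁻¹
        = (c (g * k * g⁻¹) (g * k⁻¹ * g⁻¹))⁻¹ * c (g * k * g⁻¹) g * (c g k)⁻¹ := by
  have hdc_ker (f g h : G) (hfh : f ∈ ρ.ker ∨ h ∈ ρ.ker) : mulCoboundary₂ c f g h = 1 :=
    (hdc f g h).trans (hω_norm _ _ _ (hfh.imp_right .inr))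
  exact fun g _ hk ↦ jones_star_identity_general (fun _ ↦ hc_norm _ _ (.inl rfl))
    (fun _ ↦ hc_norm _ _ (.inr rfl)) hdc_ker g hk
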